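/- For compact K ⊂ R^n and q > 0, the map p ↦ Cap_p(K) is left-continuous at p = q: lim_{p↗q} Cap_p(K) = Cap_q(K). -/

import Mathlib

/-!
For a probability measure `μ` let `N_p(μ)` be the `L^p(μ × μ)` norm of `1 / |x - y|`. Then
`1 / Cap_p(K)` is the infimum of `N_p(μ)` over the probability measures `μ` carried by `K`.

By Jensen, `N_p(μ)` increases with `p` (`rieszNorm_mono`), so `Cap_p(K)` decreases with `p`
(`rieszCapPos_antitone`) and `Cap_p(K) ≥ Cap_q(K)` for `p < q`.

For the other inequality, suppose that `Cap_p(K) > b` for all `0 < p < q`. The sets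
`{μ | N_p(μ) ≤ 1 / b}` of probability measures on `K` are then nonempty, decrease as `p`
increases to `q`, and are closed for the weak topology: the truncations of the kernel at integer
heights are bounded and continuous (`isClosed_lintegral_le`). The probability measures carried by
the compact set `K` form a compact space by Prokhorov's theorem, so a single `μ` lies in all of
these sets along a sequence `p ↗ q`, and Fatou's lemma gives `N_q(μ) ≤ 1 / b`, that is,
`Cap_q(K) ≥ b`.
-/

open MeasureTheory ENNReal Filter Topology

/-- Riesz `p`-energy for `p > 0`: the infimum over probability measures supported
on `K` of the double integral of `|x-y|^{-p}`. -/
noncomputable def rieszV {n : ℕ} (p : ℝ) (K : Set (EuclideanSpace ℝ (Fin n))) : ℝ≥0∞ :=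
  ⨅ (μ : Measure (EuclideanSpace ℝ (Fin n))) (_ : IsProbabilityMeasure μ) (_ : μ Kᶜ = 0),
    ∫⁻ x, ∫⁻ y, edist x y ^ (-p) ∂μ ∂μ

/-- Riesz `p`-capacity `Cap_p(K) = V_p(K)^{-1/p}` for `p > 0` (which is `0` when
`V_p(K) = ∞`). -/
noncomputable def rieszCapPos {n : ℕ} (p : ℝ) (K : Set (EuclideanSpace ℝ (Fin n))) : ℝ≥0∞ :=
  rieszV p K ^ (-1 / p)

/-- The `L^p(μ × μ)` norm of the kernel `1 / |x - y|`, with value `∞` on the diagonal. -/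
noncomputable def rieszNorm {X : Type*} [PseudoEMetricSpace X] [MeasurableSpace X]
    (p : ℝ) (μ : Measure X) : ℝ≥0∞ :=
  (∫⁻ z, edist z.1 z.2 ^ (-p) ∂(μ.prod μ)) ^ (1 / p)

lemma rieszNorm_mono {n : ℕ} {p q : ℝ} (hp : 0 < p) (hpq : p ≤ q)
    (μ : Measure (EuclideanSpace ℝ (Fin n))) [IsProbabilityMeasure μ] :
    rieszNorm p μ ≤ rieszNorm q μ := by
  have hm : Measurable fun z : EuclideanSpace ℝ (Fin n) × EuclideanSpace ℝ (Fin n) =>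
      (edist z.1 z.2)⁻¹ := by fun_prop
  have h := eLpNorm'_le_eLpNorm'_of_exponent_le hp hpq (μ.prod μ) hm.aestronglyMeasurable
  simpa [eLpNorm', rieszNorm, ENNReal.rpow_neg, ENNReal.inv_rpow] using h

lemma lintegral_lintegral_edist_rpow {n : ℕ} {p : ℝ} (hp : 0 < p)
    (μ : Measure (EuclideanSpace ℝ (Fin n))) [IsProbabilityMeasure μ] :
    ∫⁻ x, ∫⁻ y, edist x y ^ (-p) ∂μ ∂μ = rieszNorm p μ ^ p := by
  rw [rieszNorm, ← ENNReal.rpow_mul, one_div_mul_cancel hp.ne', ENNReal.rpow_one,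
    lintegral_prod _ (by fun_prop)]

lemma rieszCapPos_eq_inv {n : ℕ} (p : ℝ) (K : Set (EuclideanSpace ℝ (Fin n))) :
    rieszCapPos p K = (rieszV p K ^ (1 / p))⁻¹ := by
  rw [rieszCapPos, neg_div, ENNReal.rpow_neg]

lemma inv_rieszNorm_le_rieszCapPos {n : ℕ} {p : ℝ} (hp : 0 < p)
    {K : Set (EuclideanSpace ℝ (Fin n))} (μ : Measure (EuclideanSpace ℝ (Fin n)))
    [hμ : IsProbabilityMeasure μ] (hμK : μ Kᶜ = 0) :
    (rieszNorm p μ)⁻¹ ≤ rieszCapPos p K := by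
  rw [rieszCapPos_eq_inv, ENNReal.inv_le_inv, one_div, ENNReal.rpow_inv_le_iff hp,
    ← lintegral_lintegral_edist_rpow hp]
  exact iInf_le_of_le μ (iInf_le_of_le hμ (iInf_le_of_le hμK le_rfl))

lemma exists_of_lt_rieszCapPos {n : ℕ} {p : ℝ} (hp : 0 < p)
    {K : Set (EuclideanSpace ℝ (Fin n))} {b : ℝ≥0∞} (hb : b < rieszCapPos p K) :
    ∃ μ : ProbabilityMeasure (EuclideanSpace ℝ (Fin n)),
      (μ : Measure (EuclideanSpace ℝ (Fin n))) Kᶜ = 0 ∧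
      rieszNorm p (μ : Measure (EuclideanSpace ℝ (Fin n))) < b⁻¹ := by
  rw [rieszCapPos_eq_inv, ENNReal.lt_inv_iff_lt_inv, one_div, ENNReal.rpow_inv_lt_iff hp,
    rieszV] at hb
  simp only [iInf_lt_iff] at hb
  obtain ⟨μ, hμ, hμK, h⟩ := hb
  rw [lintegral_lintegral_edist_rpow hp, ENNReal.rpow_lt_rpow_iff hp] at h
  exact ⟨⟨μ, hμ⟩, hμK, h⟩

lemma rieszCapPos_antitone {n : ℕ} {p q : ℝ} (hp : 0 < p) (hpq : p ≤ q)
    (K : Set (EuclideanSpace ℝ (Fin n))) : rieszCapPos q K ≤ rieszCapPos p K := by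
  refine le_of_forall_lt fun b hb => ?_
  obtain ⟨μ, hμK, h⟩ := exists_of_lt_rieszCapPos (hp.trans_le hpq) hb
  calc b < (rieszNorm q (μ : Measure (EuclideanSpace ℝ (Fin n))))⁻¹ :=
        ENNReal.lt_inv_iff_lt_inv.2 h
    _ ≤ (rieszNorm p (μ : Measure (EuclideanSpace ℝ (Fin n))))⁻¹ :=
        ENNReal.inv_le_inv.2 (rieszNorm_mono hp hpq _)
    _ ≤ rieszCapPos p K := inv_rieszNorm_le_rieszCapPos hp _ hμK

/-- The integral of a continuous `[0, ∞]`-valued function is weakly lower semicontinuous in the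
measure, being the supremum of the integrals of the truncations `min f m`. -/
lemma isClosed_lintegral_le {X : Type*} [TopologicalSpace X] [MeasurableSpace X]
    [OpensMeasurableSpace X] {f : X → ℝ≥0∞} (hf : Continuous f) (c : ℝ≥0∞) :
    IsClosed {μ : ProbabilityMeasure X | ∫⁻ x, f x ∂(μ : Measure X) ≤ c} := by
  have hne (m : ℕ) (x : X) : min (f x) m ≠ ∞ :=
    ne_top_of_le_ne_top (ENNReal.natCast_ne_top m) (min_le_right _ _)
  let g (m : ℕ) : BoundedContinuousFunction X NNReal :=
    BoundedContinuousFunction.mkOfBound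
      ⟨fun x => (min (f x) m).toNNReal,
        ENNReal.continuousOn_toNNReal.comp_continuous (hf.min continuous_const) (hne m)⟩ m (by
      intro x y
      have h (z : X) : ((min (f z) m).toNNReal : ℝ) ≤ m := by
        have : (min (f z) m).toNNReal ≤ (m : NNReal) :=
          ENNReal.coe_le_coe.1 ((ENNReal.coe_toNNReal (hne m z)).trans_le (min_le_right _ _))
        exact_mod_cast this
      rw [NNReal.dist_eq, abs_le]
      have hx := h x
      have hy := h y
      have hx' := ((min (f x) m).toNNReal).coe_nonneg
      have hy' := ((min (f y) m).toNNReal).coe_nonneg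
      constructor <;> simp only [ContinuousMap.coe_mk] <;> linarith)
  have hg (m : ℕ) (x : X) : (g m x : ℝ≥0∞) = min (f x) m := ENNReal.coe_toNNReal (hne m x)
  have hsup (x : X) : f x = ⨆ m : ℕ, (g m x : ℝ≥0∞) := by
    simp only [hg]
    rw [← inf_iSup_eq, ENNReal.iSup_natCast, inf_top_eq]
  have hset : {μ : ProbabilityMeasure X | ∫⁻ x, f x ∂(μ : Measure X) ≤ c} =
      ⋂ m : ℕ, {μ : ProbabilityMeasure X | ∫⁻ x, g m x ∂(μ : Measure X) ≤ c} := by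
    ext μ
    have : ∫⁻ x, f x ∂(μ : Measure X) = ⨆ m : ℕ, ∫⁻ x, g m x ∂(μ : Measure X) := by
      simp_rw [hsup]
      refine lintegral_iSup (fun m => ?_) fun m k hmk x => ?_
      · exact (ENNReal.continuous_coe.comp (g m).continuous).measurable
      · simp only [hg]
        gcongr
    simp [this]
  rw [hset]
  exact isClosed_iInter fun m => isClosed_le
    (ProbabilityMeasure.continuous_lintegral_boundedContinuousFunction (g m)) continuous_const

lemma isClosed_rieszNorm_le {n : ℕ} {p : ℝ} (hp : 0 < p) (c : ℝ≥0∞) :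
    IsClosed {μ : ProbabilityMeasure (EuclideanSpace ℝ (Fin n)) |
      rieszNorm p (μ : Measure (EuclideanSpace ℝ (Fin n))) ≤ c} := by
  have hf : Continuous fun z : EuclideanSpace ℝ (Fin n) × EuclideanSpace ℝ (Fin n) =>
      edist z.1 z.2 ^ (-p) := ENNReal.continuous_rpow_const.comp continuous_edist
  have hprod : Continuous fun μ : ProbabilityMeasure (EuclideanSpace ℝ (Fin n)) => μ.prod μ :=
    ProbabilityMeasure.continuous_prod.comp (continuous_id.prodMk continuous_id)
  convert! (isClosed_lintegral_le hf (c ^ p)).preimage hprod using 1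
  ext μ
  simp [rieszNorm, ENNReal.rpow_inv_le_iff hp]

lemma isCompact_probabilityMeasure_compl_eq_zero {n : ℕ} {K : Set (EuclideanSpace ℝ (Fin n))}
    (hK : IsCompact K) :
    IsCompact {μ : ProbabilityMeasure (EuclideanSpace ℝ (Fin n)) |
      (μ : Measure (EuclideanSpace ℝ (Fin n))) Kᶜ = 0} := by
  convert! isCompact_setOfPred_probabilityMeasure_mass_eq_compl_isCompact_le
    (E := EuclideanSpace ℝ (Fin n)) (u := fun _ => 0) (K := fun _ => K)
    tendsto_const_nhds (fun _ => hK) (.inl inferInstance) using 1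
  ext μ
  simp

/-- Fatou's lemma along exponents increasing to `q`. -/
lemma rieszNorm_le_of_tendsto {n : ℕ} {q : ℝ} (hq : 0 < q) {r : ℕ → ℝ} (hr : ∀ m, 0 < r m)
    (hrq : Tendsto r atTop (𝓝 q)) {B : ℝ≥0∞}
    (μ : Measure (EuclideanSpace ℝ (Fin n))) [IsProbabilityMeasure μ]
    (h : ∀ m, rieszNorm (r m) μ ≤ B) : rieszNorm q μ ≤ B := by
  have hcont (x : ℝ≥0∞) : Tendsto (fun m => x ^ (-r m)) atTop (𝓝 (x ^ (-q))) := by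
    rcases eq_or_ne x 0 with rfl | h0
    · simp [ENNReal.zero_rpow_of_neg, hq, hr]
    rcases eq_or_ne x ∞ with rfl | ht
    · simp [ENNReal.top_rpow_of_neg, hq, hr]
    lift x to NNReal using ht
    have h0' : x ≠ 0 := by simpa using h0
    simp only [← ENNReal.coe_rpow_of_ne_zero h0']
    exact ENNReal.tendsto_coe.2
      ((NNReal.continuousAt_rpow (.inl h0')).tendsto.comp
        (tendsto_const_nhds.prodMk_nhds hrq.neg))
  rw [rieszNorm, one_div, ENNReal.rpow_inv_le_iff hq]
  have hBlim : Tendsto (fun m => B ^ r m) atTop (𝓝 (B ^ q)) := by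
    have := hcont B
    simp only [ENNReal.rpow_neg] at this
    simpa using _root_.tendsto_inv_iff.1 this
  calc ∫⁻ z, edist z.1 z.2 ^ (-q) ∂(μ.prod μ)
      = ∫⁻ z, liminf (fun m => edist z.1 z.2 ^ (-r m)) atTop ∂(μ.prod μ) := by
        simp_rw [(hcont _).liminf_eq]
    _ ≤ liminf (fun m => ∫⁻ z, edist z.1 z.2 ^ (-r m) ∂(μ.prod μ)) atTop :=
        lintegral_liminf_le fun m => by fun_prop
    _ ≤ liminf (fun m => B ^ r m) atTop := by
        refine liminf_le_liminf (.of_forall fun m => ?_)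
        rw [← ENNReal.rpow_inv_le_iff (hr m), ← one_div]
        exact h m
    _ = B ^ q := hBlim.liminf_eq

/-- For `b` a lower bound of the capacities of exponents `p ∈ (0, q)`, every `c < b` is a lower bound
of the capacity of exponent `q`. -/
lemma le_rieszCapPos_of_forall_lt {n : ℕ} {K : Set (EuclideanSpace ℝ (Fin n))}
    (hK : IsCompact K) {q : ℝ} (hq : 0 < q) {c b : ℝ≥0∞} (hc : c < b)
    (h : ∀ p, 0 < p → p < q → b ≤ rieszCapPos p K) : c ≤ rieszCapPos q K := by
  obtain ⟨r, hr_mono, hr, hrq⟩ := exists_seq_strictMono_tendsto' hq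
  let S : Set (ProbabilityMeasure (EuclideanSpace ℝ (Fin n))) :=
    {μ | (μ : Measure (EuclideanSpace ℝ (Fin n))) Kᶜ = 0}
  let N (m : ℕ) : Set (ProbabilityMeasure (EuclideanSpace ℝ (Fin n))) :=
    {μ | rieszNorm (r m) (μ : Measure (EuclideanSpace ℝ (Fin n))) ≤ c⁻¹}
  have hS : IsCompact S := isCompact_probabilityMeasure_compl_eq_zero hK
  have hN (m : ℕ) : IsClosed (N m) := isClosed_rieszNorm_le (hr m).1 _
  obtain ⟨μ, hμ⟩ := IsCompact.nonempty_iInter_of_sequence_nonempty_isCompact_isClosed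
    (fun m => S ∩ N m)
    (fun m μ hμ => ⟨hμ.1, (rieszNorm_mono (hr m).1 (hr_mono m.lt_succ_self).le _).trans hμ.2⟩)
    (fun m => by
      obtain ⟨μ, hμK, hμ⟩ :=
        exists_of_lt_rieszCapPos (hr m).1 (hc.trans_le (h _ (hr m).1 (hr m).2))
      exact ⟨μ, hμK, hμ.le⟩)
    (hS.inter_right (hN 0)) fun m => hS.isClosed.inter (hN m)
  rw [Set.mem_iInter] at hμ
  have hμq := rieszNorm_le_of_tendsto hq (fun m => (hr m).1) hrq
    (μ : Measure (EuclideanSpace ℝ (Fin n))) fun m => (hμ m).2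
  exact (ENNReal.le_inv_iff_le_inv.2 hμq).trans (inv_rieszNorm_le_rieszCapPos hq _ (hμ 0).1)

/-- For compact `K ⊆ ℝⁿ` and `q > 0`, the map `p ↦ Cap_p(K)` is
left-continuous at `p = q`: `lim_{p↗q} Cap_p(K) = Cap_q(K)`. -/
theorem rieszCapPos_left_continuous {n : ℕ} (K : Set (EuclideanSpace ℝ (Fin n)))
    (hK : IsCompact K) (q : ℝ) (hq : 0 < q) :
    Tendsto (fun p : ℝ => rieszCapPos p K) (𝓝[<] q) (𝓝 (rieszCapPos q K)) := by
  refine tendsto_order.2 ⟨fun a ha => ?_, fun b hb => ?_⟩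
  · filter_upwards [Ioo_mem_nhdsLT hq] with p hp
    exact ha.trans_le (rieszCapPos_antitone hp.1 hp.2.le K)
  · obtain ⟨c, hqc, hcb⟩ := exists_between hb
    -- By monotonicity, one exponent `p < q` with `Cap_p(K) < b` is enough.
    obtain ⟨p, hp, hpq, hpb⟩ : ∃ p, 0 < p ∧ p < q ∧ rieszCapPos p K < b := by
      by_contra! h
      exact hqc.not_ge (le_rieszCapPos_of_forall_lt hK hq hcb h)
    filter_upwards [Ioo_mem_nhdsLT hpq] with s hs
    exact (rieszCapPos_antitone hp hs.1.le K).trans_lt hpb
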